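/- For i = 1,…,n let ℓ_i(w) = (1/4)(⟨β(w), x_i⟩ − y_i)² on ℝ^{2d}, and fix ρ ≥ 0 and α ∈ ℝ^d with all α_i > 0. Let w : [0,∞) → ℝ^{2d} be a C¹ solution of the full-batch 1-SAM gradient flow w′(t) = −(1/n)∑_{i=1}^n ∇ℓ_i(w(t) + ρ∇ℓ_i(w(t))) with w(0) = (α, α). Set r_i(t) = ⟨β(w(t)), x_i⟩ − y_i and r_{sam,i}(t) = ⟨β(w(t) + ρ∇ℓ_i(w(t))), x_i⟩ − y_i. Assume the improper integrals ∫₀^∞ r_{sam,i}(s) ds and ∫₀^∞ r_{sam,i}(s)·r_i(s) ds converge for each i, and that w(t) converges to some w_∞ whose predictor β_∞ = β(w_∞) satisfies Xβ_∞ = y. Define α′ ∈ ℝ^d_{>0} componentwise by (α′_j)² = α_j²·exp(−(2ρ/n)·∑_{i=1}^n x_{ij}²·∫₀^∞ r_{sam,i}(s) r_i(s) ds). Then β_∞ minimizes φ_{α′}(β) over the affine set {β ∈ ℝ^d : Xβ = y}. -/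

import Mathlib

open scoped RealInnerProductSpace

noncomputable section

/-- Linear predictor of a diagonal linear network: `β(w)ⱼ = (w₊)ⱼ² − (w₋)ⱼ²`, where the
parameter vector `v ∈ ℝ^{2d}` is indexed by `Fin d ⊕ Fin d` (`inl` = `w₊`, `inr` = `w₋`). -/
def betaOf {d : ℕ} (v : EuclideanSpace ℝ (Fin d ⊕ Fin d)) (j : Fin d) : ℝ :=
  v (Sum.inl j) ^ 2 - v (Sum.inr j) ^ 2

/-- Residual of the predictor at the `i`-th data point: `⟨β(v), xᵢ⟩ − yᵢ`. -/
def resid {d n : ℕ} (X : Matrix (Fin n) (Fin d) ℝ) (y : Fin n → ℝ)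
    (v : EuclideanSpace ℝ (Fin d ⊕ Fin d)) (i : Fin n) : ℝ :=
  ∑ j, X i j * betaOf v j - y i

/-- The per-example squared loss `ℓᵢ(w) = (1/4)(⟨β(w), xᵢ⟩ − yᵢ)²`. -/
def exLoss {d n : ℕ} (X : Matrix (Fin n) (Fin d) ℝ) (y : Fin n → ℝ) (i : Fin n)
    (v : EuclideanSpace ℝ (Fin d ⊕ Fin d)) : ℝ :=
  (1 / 4 : ℝ) * resid X y v i ^ 2

/-- The 1-SAM ascent point for example `i`: `w(t) + ρ∇ℓᵢ(w(t))`. -/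
def oneSamAscent {d n : ℕ} (X : Matrix (Fin n) (Fin d) ℝ) (y : Fin n → ℝ) (ρ : ℝ)
    (w : ℝ → EuclideanSpace ℝ (Fin d ⊕ Fin d)) (i : Fin n) (t : ℝ) :
    EuclideanSpace ℝ (Fin d ⊕ Fin d) :=
  w t + ρ • gradient (exLoss X y i) (w t)

/-- `q(z) = 2 − √(4 + z²) + z·arcsinh(z/2)`. -/
def hypq (z : ℝ) : ℝ := 2 - Real.sqrt (4 + z ^ 2) + z * Real.arsinh (z / 2)

/-- The hyperbolic-entropy potential `φ_α(β) = ∑ⱼ αⱼ² q(βⱼ/αⱼ²)`. -/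
def hypEntropy {d : ℕ} (α : Fin d → ℝ) (b : Fin d → ℝ) : ℝ :=
  ∑ j, α j ^ 2 * hypq (b j / α j ^ 2)

end

open MeasureTheory Filter Set in
theorem aux_lin_ode (f a : ℝ → ℝ) (ha : ContinuousOn a (Set.Ici 0))
    (hi : MeasureTheory.IntegrableOn a (Set.Ioi 0))
    (hf : ∀ t ∈ Set.Ici (0:ℝ), HasDerivWithinAt f (a t * f t) (Set.Ici 0) t) (L : ℝ)
    (hL : Filter.Tendsto f Filter.atTop (nhds L)) :
    L = f 0 * Real.exp (∫ s in Set.Ioi (0:ℝ), a s) := by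
  set b : ℝ → ℝ := fun t => a (max t 0) with hb
  have hbc : Continuous b := by
    rw [← continuousOn_univ]
    exact ha.comp (by fun_prop) (fun t _ => le_max_right t 0)
  have hB : ∀ t, HasDerivAt (fun t => ∫ s in (0:ℝ)..t, b s) (b t) t := fun t =>
    intervalIntegral.integral_hasDerivAt_right (hbc.intervalIntegrable _ _)
      hbc.stronglyMeasurable.stronglyMeasurableAtFilter hbc.continuousAt
  have hd : ∀ t ∈ Set.Ici (0:ℝ), HasDerivWithinAt
      (fun t => f t * Real.exp (-∫ s in (0:ℝ)..t, b s)) 0 (Set.Ici 0) t := by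
    intro t ht
    have h := (hf t ht).mul ((hB t).neg.exp.hasDerivWithinAt (s := Set.Ici 0))
    refine h.congr_deriv ?_
    have : b t = a t := by simp only [hb]; rw [max_eq_left ht]
    rw [this]
    simp only [Pi.neg_apply]
    ring
  have hconst : ∀ t ∈ Set.Ici (0:ℝ), f t = f 0 * Real.exp (∫ s in (0:ℝ)..t, b s) := by
    intro t ht
    have h := constant_of_has_deriv_right_zero (a := 0) (b := t)
      (f := fun t => f t * Real.exp (-∫ s in (0:ℝ)..t, b s))
      (fun x hx => ((hd x hx.1).continuousWithinAt).mono Set.Icc_subset_Ici_self)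
      (fun x hx => (hd x hx.1).mono (Set.Ici_subset_Ici.2 hx.1)) t ⟨ht, le_rfl⟩
    simp only [intervalIntegral.integral_same, neg_zero, Real.exp_zero, mul_one] at h
    rw [← h, mul_assoc, ← Real.exp_add]
    simp
  have hab : Set.EqOn b a (Set.Ioi 0) := fun t ht => by
    simp only [hb]; rw [max_eq_left (le_of_lt ht)]
  have hbi : MeasureTheory.IntegrableOn b (Set.Ioi 0) :=
    hi.congr_fun hab.symm measurableSet_Ioi
  have hlim := MeasureTheory.intervalIntegral_tendsto_integral_Ioi 0 hbi Filter.tendsto_id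
  rw [MeasureTheory.setIntegral_congr_fun measurableSet_Ioi hab] at hlim
  have h2 := (Real.continuous_exp.tendsto _).comp hlim |>.const_mul (f 0)
  refine tendsto_nhds_unique hL (h2.congr' ?_)
  filter_upwards [Filter.eventually_ge_atTop (0:ℝ)] with t ht
  simp [hconst t ht]

theorem aux_cosh (u v : ℝ) : Real.cosh v + (u - v) * Real.sinh v ≤ Real.cosh u := by
  have h1 : Real.exp v * (u - v + 1) ≤ Real.exp u := by
    have := mul_le_mul_of_nonneg_left (Real.add_one_le_exp (u - v)) (Real.exp_pos v).le
    rwa [← Real.exp_add, show v + (u - v) = u by ring] at this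
  have h2 : Real.exp (-v) * (-(u - v) + 1) ≤ Real.exp (-u) := by
    have := mul_le_mul_of_nonneg_left (Real.add_one_le_exp (-(u - v))) (Real.exp_pos (-v)).le
    rwa [← Real.exp_add, show -v + -(u - v) = -u by ring] at this
  rw [Real.cosh_eq, Real.sinh_eq, Real.cosh_eq]
  linarith

theorem aux_hypq_sinh (u : ℝ) :
    hypq (2 * Real.sinh u) = 2 - 2 * Real.cosh u + 2 * u * Real.sinh u := by
  unfold hypq
  have h : Real.sqrt (4 + (2 * Real.sinh u) ^ 2) = 2 * Real.cosh u := by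
    rw [show 4 + (2 * Real.sinh u) ^ 2 = (2 * Real.cosh u) ^ 2 by
      have := Real.cosh_sq u; nlinarith]
    exact Real.sqrt_sq (by have := Real.cosh_pos u; linarith)
  rw [h, show 2 * Real.sinh u / 2 = Real.sinh u by ring, Real.arsinh_sinh]
  ring

theorem aux_hypq_le (u z : ℝ) :
    hypq (2 * Real.sinh u) + u * (z - 2 * Real.sinh u) ≤ hypq z := by
  obtain ⟨v, rfl⟩ : ∃ v, z = 2 * Real.sinh v :=
    ⟨Real.arsinh (z / 2), by rw [Real.sinh_arsinh]; ring⟩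
  rw [aux_hypq_sinh, aux_hypq_sinh]
  have := aux_cosh u v
  nlinarith

theorem aux_grad {d n : ℕ} (X : Matrix (Fin n) (Fin d) ℝ) (y : Fin n → ℝ) (i : Fin n)
    (v : EuclideanSpace ℝ (Fin d ⊕ Fin d)) :
    gradient (exLoss X y i) v = WithLp.toLp 2 (Sum.elim
      (fun j => resid X y v i * X i j * v (Sum.inl j))
      (fun j => -(resid X y v i * X i j * v (Sum.inr j)))) := by
  apply HasGradientAt.gradient
  rw [hasGradientAt_iff_hasFDerivAt]
  have hp : ∀ k, HasFDerivAt (fun v : EuclideanSpace ℝ (Fin d ⊕ Fin d) => v k)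
      (EuclideanSpace.proj k : EuclideanSpace ℝ (Fin d ⊕ Fin d) →L[ℝ] ℝ) v := fun k =>
    (EuclideanSpace.proj k : EuclideanSpace ℝ (Fin d ⊕ Fin d) →L[ℝ] ℝ).hasFDerivAt
  have hr : HasFDerivAt (fun v => resid X y v i) _ v :=
    (HasFDerivAt.fun_sum (u := Finset.univ) (fun j _ =>
      (((hp (Sum.inl j)).pow 2).sub ((hp (Sum.inr j)).pow 2)).const_mul (X i j))).sub_const (y i)
  have hl : HasFDerivAt (exLoss X y i) _ v := (hr.pow 2).const_mul (1/4:ℝ)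
  refine hl.congr_fderiv ?_
  ext z
  simp [PiLp.inner_apply, Fintype.sum_sum_type, Finset.mul_sum]
  rw [← sub_eq_add_neg, ← Finset.sum_sub_distrib]
  refine Finset.sum_congr rfl fun j _ => ?_
  ring

/-- Implicit bias of the full-batch 1-SAM gradient flow for diagonal
linear networks: if the flow `w′(t) = −(1/n)∑ᵢ ∇ℓᵢ(w(t) + ρ∇ℓᵢ(w(t)))` started at
`w(0) = (α, α)` converges to `w_∞` with interpolating predictor `β_∞ = β(w_∞)` (`Xβ_∞ = y`),
and the stated improper integrals converge, then `β_∞` minimizes `φ_{α′}` over `{β : Xβ = y}`,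
where `(α′ⱼ)² = αⱼ²·exp(−(2ρ/n)·∑ᵢ xᵢⱼ²·∫₀^∞ r_{sam,i}(s) rᵢ(s) ds)`. -/
theorem onesam_implicit_bias_diagonal_network {d n : ℕ}
    (X : Matrix (Fin n) (Fin d) ℝ) (y : Fin n → ℝ)
    (ρ : ℝ) (hρ : 0 ≤ ρ) (α : Fin d → ℝ) (hα : ∀ j, 0 < α j)
    (w : ℝ → EuclideanSpace ℝ (Fin d ⊕ Fin d))
    (hflow : ∀ t ∈ Set.Ici (0 : ℝ), HasDerivWithinAt w
      (-((n : ℝ)⁻¹ • ∑ i, gradient (exLoss X y i) (oneSamAscent X y ρ w i t)))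
      (Set.Ici 0) t)
    (hinit : ∀ j, w 0 (Sum.inl j) = α j ∧ w 0 (Sum.inr j) = α j)
    (hint1 : ∀ i : Fin n, MeasureTheory.IntegrableOn
      (fun s => resid X y (oneSamAscent X y ρ w i s) i) (Set.Ioi 0))
    (hint2 : ∀ i : Fin n, MeasureTheory.IntegrableOn
      (fun s => resid X y (oneSamAscent X y ρ w i s) i * resid X y (w s) i) (Set.Ioi 0))
    (winf : EuclideanSpace ℝ (Fin d ⊕ Fin d))
    (hconv : Filter.Tendsto w Filter.atTop (nhds winf))
    (hinterp : ∀ i, ∑ j, X i j * betaOf winf j = y i)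
    (α' : Fin d → ℝ) (hα'pos : ∀ j, 0 < α' j)
    (hα' : ∀ j, α' j ^ 2 = α j ^ 2 * Real.exp (-(2 * ρ / n) *
      ∑ i, X i j ^ 2 *
        ∫ s in Set.Ioi (0 : ℝ), resid X y (oneSamAscent X y ρ w i s) i * resid X y (w s) i)) :
    ∀ β' : Fin d → ℝ, (∀ i, ∑ j, X i j * β' j = y i) →
      hypEntropy α' (betaOf winf) ≤ hypEntropy α' β' := by
  intro β' hβ'
  have hwc : ContinuousOn w (Set.Ici 0) := fun t ht => (hflow t ht).continuousWithinAt
  have hwk : ∀ k, ContinuousOn (fun t => w t k) (Set.Ici 0) := fun k =>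
    (EuclideanSpace.proj k : EuclideanSpace ℝ (Fin d ⊕ Fin d) →L[ℝ] ℝ).continuous.comp_continuousOn hwc
  have hres : ∀ (u : ℝ → EuclideanSpace ℝ (Fin d ⊕ Fin d)) (i : Fin n),
      (∀ k, ContinuousOn (fun t => u t k) (Set.Ici 0)) →
      ContinuousOn (fun t => resid X y (u t) i) (Set.Ici 0) := by
    intro u i hu
    unfold resid betaOf
    refine ContinuousOn.sub (continuousOn_finsetSum _ fun j _ => ?_) continuousOn_const
    exact continuousOn_const.mul (((hu _).pow 2).sub ((hu _).pow 2))
  have hrc : ∀ i, ContinuousOn (fun t => resid X y (w t) i) (Set.Ici 0) := fun i => hres w i hwk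
  have hal : ∀ i t j, oneSamAscent X y ρ w i t (Sum.inl j)
      = w t (Sum.inl j) + ρ * (resid X y (w t) i * X i j * w t (Sum.inl j)) := by
    intro i t j
    simp [oneSamAscent, aux_grad]
  have har : ∀ i t j, oneSamAscent X y ρ w i t (Sum.inr j)
      = w t (Sum.inr j) + ρ * (-(resid X y (w t) i * X i j * w t (Sum.inr j))) := by
    intro i t j
    simp [oneSamAscent, aux_grad]
  have hsc : ∀ i, ContinuousOn (fun t => resid X y (oneSamAscent X y ρ w i t) i) (Set.Ici 0) := by
    intro i
    refine hres _ i ?_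
    rintro (j | j)
    · simp only [hal]
      exact (hwk _).add (continuousOn_const.mul (((hrc i).mul continuousOn_const).mul (hwk _)))
    · simp only [har]
      exact (hwk _).add (continuousOn_const.mul
        (((hrc i).mul continuousOn_const).mul (hwk _)).neg)
  have hdk : ∀ k, ∀ t ∈ Set.Ici (0:ℝ), HasDerivWithinAt (fun t => w t k)
      ((-((n : ℝ)⁻¹ • ∑ i, gradient (exLoss X y i) (oneSamAscent X y ρ w i t))) k)
      (Set.Ici 0) t := fun k t ht =>
    (EuclideanSpace.proj k : EuclideanSpace ℝ (Fin d ⊕ Fin d) →L[ℝ] ℝ).hasFDerivAt.comp_hasDerivWithinAt t (hflow t ht)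
  have hlk : ∀ k, Filter.Tendsto (fun t => w t k) Filter.atTop (nhds (winf k)) := fun k =>
    ((EuclideanSpace.proj k : EuclideanSpace ℝ (Fin d ⊕ Fin d) →L[ℝ] ℝ).continuous.tendsto _).comp hconv
  set rs : Fin n → ℝ → ℝ := fun i s => resid X y (oneSamAscent X y ρ w i s) i with hrs
  set r : Fin n → ℝ → ℝ := fun i s => resid X y (w s) i with hr
  -- generic solution, for a sign c
  have key : ∀ (k : Fin d ⊕ Fin d) (j : Fin d) (c : ℝ),
      (∀ t ∈ Set.Ici (0:ℝ), HasDerivWithinAt (fun t => w t k)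
        ((∑ i, (c * (n:ℝ)⁻¹ * X i j * rs i t + -(ρ * (n:ℝ)⁻¹) * X i j ^ 2 * (rs i t * r i t)))
          * w t k) (Set.Ici 0) t) →
      winf k = w 0 k * Real.exp (∑ i, (c * (n:ℝ)⁻¹ * X i j * (∫ s in Set.Ioi (0:ℝ), rs i s)
        + -(ρ * (n:ℝ)⁻¹) * X i j ^ 2 * ∫ s in Set.Ioi (0:ℝ), rs i s * r i s)) := by
    intro k j c h
    have hi : ∀ i ∈ (Finset.univ : Finset (Fin n)), MeasureTheory.IntegrableOn (fun t =>
        c * (n:ℝ)⁻¹ * X i j * rs i t + -(ρ * (n:ℝ)⁻¹) * X i j ^ 2 * (rs i t * r i t))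
        (Set.Ioi 0) := fun i _ =>
      MeasureTheory.Integrable.add ((hint1 i).const_mul _) ((hint2 i).const_mul _)
    have := aux_lin_ode (fun t => w t k) (fun t => ∑ i, (c * (n:ℝ)⁻¹ * X i j * rs i t
      + -(ρ * (n:ℝ)⁻¹) * X i j ^ 2 * (rs i t * r i t)))
      (continuousOn_finsetSum _ fun i _ => (continuousOn_const.mul (hsc i)).add
        (continuousOn_const.mul ((hsc i).mul (hrc i))))
      (MeasureTheory.integrable_finsetSum _ hi) h _ (hlk k)
    rw [this, MeasureTheory.integral_finsetSum _ hi]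
    congr 2
    refine Finset.sum_congr rfl fun i _ => ?_
    rw [MeasureTheory.integral_add ((hint1 i).const_mul _) ((hint2 i).const_mul _),
      MeasureTheory.integral_const_mul, MeasureTheory.integral_const_mul]
  have kl := fun j => key (Sum.inl j) j (-1) (fun t ht => (hdk _ t ht).congr_deriv (by
    simp [aux_grad, hal, Finset.mul_sum, Finset.sum_mul, ← Finset.sum_neg_distrib, hrs, hr]
    refine Finset.sum_congr rfl fun i _ => ?_
    ring))
  have kr := fun j => key (Sum.inr j) j 1 (fun t ht => (hdk _ t ht).congr_deriv (by
    simp [aux_grad, har, Finset.mul_sum, Finset.sum_mul, ← Finset.sum_neg_distrib, hrs, hr]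
    refine Finset.sum_congr rfl fun i _ => ?_
    ring))
  set I : Fin n → ℝ := fun i => ∫ s in Set.Ioi (0:ℝ), rs i s with hI
  set J : Fin n → ℝ := fun i => ∫ s in Set.Ioi (0:ℝ), rs i s * r i s with hJ
  have hbeta : ∀ j, betaOf winf j / α' j ^ 2
      = 2 * Real.sinh (∑ i, (-(2 * (n:ℝ)⁻¹) * I i) * X i j) := by
    intro j
    have hα'j : α' j ^ 2 = α j ^ 2 * Real.exp (-(2 * ρ / n) * ∑ i, X i j ^ 2 * J i) := hα' j
    rw [div_eq_iff (pow_pos (hα'pos j) 2).ne']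
    unfold betaOf
    rw [kl, kr, (hinit j).1, (hinit j).2, hα'j, mul_pow, mul_pow, ← Real.exp_nat_mul,
      ← Real.exp_nat_mul, Real.sinh_eq]
    rw [show ∀ a b c e : ℝ, 2 * ((a - b) / 2) * (c * e) = c * (a * e) - c * (b * e) by
      intros; ring, ← Real.exp_add, ← Real.exp_add]
    congr 3
    · simp only [Finset.mul_sum, ← Finset.sum_add_distrib]
      refine Finset.sum_congr rfl fun i _ => ?_
      push_cast
      ring
    · simp only [Finset.mul_sum, ← Finset.sum_add_distrib, ← Finset.sum_neg_distrib]
      refine Finset.sum_congr rfl fun i _ => ?_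
      push_cast
      ring
  set U : Fin d → ℝ := fun j => ∑ i, (-(2 * (n:ℝ)⁻¹) * I i) * X i j with hU
  have hzero : ∑ j, U j * (β' j - betaOf winf j) = 0 := by
    simp only [hU, Finset.sum_mul]
    rw [Finset.sum_comm]
    refine Finset.sum_eq_zero fun i _ => ?_
    have : ∑ j, X i j * (β' j - betaOf winf j) = 0 := by
      simp only [mul_sub, Finset.sum_sub_distrib, hβ', hinterp, sub_self]
    simp only [mul_assoc, ← Finset.mul_sum, this, mul_zero]
  have hfin : hypEntropy α' (betaOf winf) + ∑ j, U j * (β' j - betaOf winf j)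
      ≤ hypEntropy α' β' := by
    unfold hypEntropy
    rw [← Finset.sum_add_distrib]
    refine Finset.sum_le_sum fun j _ => ?_
    have hp := pow_pos (hα'pos j) 2
    have h := mul_le_mul_of_nonneg_left (aux_hypq_le (U j) (β' j / α' j ^ 2)) hp.le
    rw [← hbeta j] at h
    refine le_trans (le_of_eq ?_) h
    generalize hypq (betaOf winf j / α' j ^ 2) = Q
    have hne := (hα'pos j).ne'
    field_simp
  linarith
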